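/- Let n be a positive integer that is not a power of 2, let p be the smallest odd prime factor of n, and let d be the 2-adic valuation of n. Then the smallest element of Lspec(n) other than 1 (i.e., the length of the shortest nontrivial decomposition of n) is min(p, 2^(d+1)). -/

import Mathlib

/-- `IsDecomp n a m` means the `m` consecutive positive integers
`a+1, a+2, …, a+m` form a decomposition of `n`. -/
def IsDecomp (n a m : ℕ) : Prop :=
  1 ≤ m ∧ (Finset.range m).sum (fun i => a + i + 1) = n

/-- The length spectrum of `n`: the set of lengths of decompositions of `n`. -/
def Lspec (n : ℕ) : Set ℕ := {m | ∃ a, IsDecomp n a m}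

/-!
A decomposition of `n` of length `m` amounts to a factorization `2 * n = m * l` with `m < l` and
`m`, `l` of opposite parity: `l` is the sum of the first and the last term. For odd `m` this means
`m ∣ n`, for even `m` it means that `m` divides `2 * n` and absorbs the whole power `2 ^ (d + 1)`
of two in it; in both cases the only other constraint is `m ^ 2 < 2 * n`. A nontrivial odd length
is therefore at least `p`, and an even one at least `2 ^ (d + 1)`. The smaller of these two numbers
is small enough to be a length, because their product divides `2 * n`.
-/

theorem two_mul_sum_range_add_add_one (a m : ℕ) :
    2 * ∑ i ∈ Finset.range m, (a + i + 1) = m * (2 * a + m + 1) := by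
  induction m with
  | zero => simp
  | succ k ih => rw [Finset.sum_range_succ, mul_add, ih]; ring

theorem mem_lspec_iff {n m : ℕ} :
    m ∈ Lspec n ↔ 0 < m ∧ ∃ l, m < l ∧ Odd (m + l) ∧ m * l = 2 * n := by
  constructor
  · rintro ⟨a, hm, hsum⟩
    refine ⟨hm, 2 * a + m + 1, by omega, ⟨a + m, by ring⟩, ?_⟩
    rw [← hsum, two_mul_sum_range_add_add_one]
  · rintro ⟨hm, l, hml, ⟨s, hs⟩, hmul⟩
    obtain ⟨a, rfl⟩ : ∃ a, l = 2 * a + m + 1 := ⟨s - m, by omega⟩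
    rw [← two_mul_sum_range_add_add_one] at hmul
    exact ⟨a, hm, Nat.eq_of_mul_eq_mul_left two_pos hmul⟩

theorem mem_lspec_iff_of_odd {n m : ℕ} (hm : Odd m) :
    m ∈ Lspec n ↔ m ∣ n ∧ m ^ 2 < 2 * n := by
  rw [mem_lspec_iff]
  constructor
  · rintro ⟨hm₀, l, hml, -, hmul⟩
    refine ⟨(Nat.coprime_two_right.mpr hm).dvd_of_dvd_mul_left ⟨l, hmul.symm⟩, ?_⟩
    rw [← hmul, sq]
    exact Nat.mul_lt_mul_of_pos_left hml hm₀
  · rintro ⟨⟨t, rfl⟩, hlt⟩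
    refine ⟨hm.pos, 2 * t, ?_, hm.add_even (even_two_mul t), by ring⟩
    exact lt_of_mul_lt_mul_left (by linarith : m * m < m * (2 * t)) m.zero_le

theorem odd_of_two_pow_dvd_of_mul_eq_two_mul {n m l : ℕ} (hn : n ≠ 0)
    (hpow : 2 ^ (padicValNat 2 n + 1) ∣ m) (hmul : m * l = 2 * n) : Odd l := by
  by_contra hl
  have hdvd : 2 ^ (padicValNat 2 n + 1) * 2 ∣ n * 2 := by
    rw [mul_comm n, ← hmul]
    exact mul_dvd_mul hpow (Nat.not_odd_iff_even.mp hl).two_dvd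
  exact pow_succ_padicValNat_not_dvd hn (Nat.dvd_of_mul_dvd_mul_right two_pos hdvd)

theorem two_pow_padicValNat_add_one_dvd_two_mul (n : ℕ) :
    2 ^ (padicValNat 2 n + 1) ∣ 2 * n := by
  rw [pow_succ']
  exact mul_dvd_mul_left 2 pow_padicValNat_dvd

theorem mem_lspec_iff_of_even {n m : ℕ} (hm : Even m) :
    m ∈ Lspec n ↔ m ∣ 2 * n ∧ 2 ^ (padicValNat 2 n + 1) ∣ m ∧ m ^ 2 < 2 * n := by
  rw [mem_lspec_iff]
  constructor
  · rintro ⟨hm₀, l, hml, hodd, hmul⟩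
    have hl : Odd l := (Nat.odd_add'.mp hodd).mpr hm
    have hcop : Nat.Coprime (2 ^ (padicValNat 2 n + 1)) l :=
      (Nat.coprime_two_left.mpr hl).pow_left _
    refine ⟨⟨l, hmul.symm⟩, hcop.dvd_of_dvd_mul_right ?_, ?_⟩
    · exact hmul ▸ two_pow_padicValNat_add_one_dvd_two_mul n
    · rw [← hmul, sq]
      exact Nat.mul_lt_mul_of_pos_left hml hm₀
  · rintro ⟨⟨l, hmul⟩, hpow, hlt⟩
    have hn : n ≠ 0 := by rintro rfl; simp at hlt
    have hl : Odd l := odd_of_two_pow_dvd_of_mul_eq_two_mul hn hpow hmul.symm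
    have hm₀ : 0 < m := Nat.pos_of_dvd_of_pos ⟨l, hmul⟩ (by omega)
    refine ⟨hm₀, l, ?_, hm.add_odd hl, hmul.symm⟩
    rw [hmul, sq] at hlt
    exact lt_of_mul_lt_mul_left hlt m.zero_le

theorem min_sq_lt_mul {R : Type*} [CommSemiring R] [LinearOrder R] [IsStrictOrderedRing R]
    {a b : R} (hab : a ≠ b) (ha : 0 < a) (hb : 0 < b) : min a b ^ 2 < a * b := by
  rw [← min_mul_max a b, sq]
  exact mul_lt_mul_of_pos_left (min_lt_max.mpr hab) (lt_min ha hb)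

theorem min_two_pow_mem_lspec_of_odd_of_dvd {n q : ℕ} (hn : n ≠ 0) (hq : Odd q) (hqn : q ∣ n) :
    min q (2 ^ (padicValNat 2 n + 1)) ∈ Lspec n := by
  have heven : Even (2 ^ (padicValNat 2 n + 1)) := even_two.pow_of_ne_zero (Nat.succ_ne_zero _)
  have hne : q ≠ 2 ^ (padicValNat 2 n + 1) := fun h => Nat.not_even_iff_odd.mpr hq (h ▸ heven)
  have hpow := two_pow_padicValNat_add_one_dvd_two_mul n
  have hmul : q * 2 ^ (padicValNat 2 n + 1) ∣ 2 * n :=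
    ((Nat.coprime_two_right.mpr hq).pow_right _).mul_dvd_of_dvd_of_dvd (hqn.mul_left 2) hpow
  have hlt : min q (2 ^ (padicValNat 2 n + 1)) ^ 2 < 2 * n :=
    (min_sq_lt_mul hne hq.pos (by positivity)).trans_le (Nat.le_of_dvd (by omega) hmul)
  rcases min_choice q (2 ^ (padicValNat 2 n + 1)) with h | h <;> rw [h] at hlt ⊢
  · exact (mem_lspec_iff_of_odd hq).mpr ⟨hqn, hlt⟩
  · exact (mem_lspec_iff_of_even heven).mpr ⟨hpow, dvd_rfl, hlt⟩

/-- Let `n` be a positive integer that is not a power of 2, let `p` be the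
smallest odd prime factor of `n`, and let `d` be the 2-adic valuation of `n`.
Then the smallest element of `Lspec n` other than `1` (the length of the
shortest nontrivial decomposition of `n`) is `min p (2^(d+1))`. -/
theorem shortest_nontrivial_decomposition (n p d : ℕ) (hn : 0 < n)
    (hnot : ¬ ∃ e : ℕ, n = 2 ^ e)
    (hp : p.Prime ∧ Odd p ∧ p ∣ n ∧ ∀ q : ℕ, q.Prime → Odd q → q ∣ n → p ≤ q)
    (hd : d = padicValNat 2 n) :
    IsLeast {m | m ∈ Lspec n ∧ m ≠ 1} (min p (2 ^ (d + 1))) := by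
  obtain ⟨hp_prime, hp_odd, hpn, hp_le⟩ := hp
  subst hd
  refine ⟨⟨min_two_pow_mem_lspec_of_odd_of_dvd hn.ne' hp_odd hpn, ?_⟩, ?_⟩
  · exact (lt_min hp_prime.one_lt (Nat.one_lt_two_pow (Nat.succ_ne_zero _))).ne'
  · rintro m ⟨hm, hm_ne_one⟩
    have hm_pos : 0 < m := (mem_lspec_iff.mp hm).1
    rcases Nat.even_or_odd m with hm_even | hm_odd
    · have hpow := ((mem_lspec_iff_of_even hm_even).mp hm).2.1
      exact min_le_of_right_le (Nat.le_of_dvd hm_pos hpow)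
    · have hmn := ((mem_lspec_iff_of_odd hm_odd).mp hm).1
      have hfac := m.minFac_dvd
      have hp_le_minFac : p ≤ m.minFac :=
        hp_le _ (Nat.minFac_prime hm_ne_one) (hm_odd.of_dvd_nat hfac) (hfac.trans hmn)
      exact min_le_of_left_le (hp_le_minFac.trans (Nat.minFac_le hm_pos))
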